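/- Let m ≥ 0 and let θ : Fin m → ℝ be injective with 0 < θ(l) < π for all l. On V = (Fin m → ℍ) × ℂ, a real inner product space of dimension 4m+2, define J₀(v,z) = (l ↦ i·v(l), i·z) and J₁(v,z) = (l ↦ (cos θ(l) · i + sin θ(l) · k)·v(l), i·z). Then for every integer k with 0 ≤ k ≤ 2m+1, the set of real subspaces P of V with dim P = 2k that are invariant under both J₀ and J₁ is finite, of cardinality σ(k, 2m+1) = binomial(m, ⌊k/2⌋). -/

import Mathlib

/-!
Write `c_l = cos θ_l`. The operator `-(J₀ J₁ + J₁ J₀) / 2` is multiplication by `c_l` on the `l`-th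
copy of `ℍ` and by `1` on `ℂ`. Since `cos` is injective on `(0, π)` and omits the value `1` there,
these scalars are pairwise distinct, so Lagrange interpolation polynomials in this operator are the
projections to the summands (`poly_mem`, `single_mem`, `snd_mem`): an invariant subspace contains
the components of each of its elements.

As `sin θ_l ≠ 0`, the algebra generated by `i` and `cos θ_l i + sin θ_l k` is all of `ℍ`, a
division ring, so the part of an invariant subspace in the `l`-th summand is `0` or `ℍ`
(`quaternion_span`); similarly the part in `ℂ` is `0` or `ℂ`. Hence the invariant subspaces are
exactly the coordinate subspaces `ℍ^S × 0` and `ℍ^S × ℂ` for `S ⊆ Fin m` (`eq_coordSub`), of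
dimension `4|S|` and `4|S| + 2`. Dimension `2k` forces `|S| = ⌊k/2⌋` and the parity of `k` decides
whether `ℂ` occurs, leaving `binomial(m, ⌊k/2⌋)` choices.
-/

open scoped Quaternion

/-- The quaternion `i`. -/
def qI : ℍ[ℝ] := ⟨0, 1, 0, 0⟩
/-- The quaternion `k`. -/
def qK : ℍ[ℝ] := ⟨0, 0, 0, 1⟩

/-- For integers `k, n`: `σ(k,n) = 0` if `k < 0` or `k > n`; otherwise `σ(k,n) = 0`
if `k` is odd and `n` is even, and `σ(k,n) = binomial(⌊n/2⌋, ⌊k/2⌋)` otherwise. -/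
def sigmaInt (k n : ℤ) : ℤ :=
  if k < 0 ∨ n < k then 0
  else if Odd k ∧ Even n then 0
  else ((n / 2).toNat.choose (k / 2).toNat : ℤ)

/-- The set of real subspaces of `ℍ^m × ℂ` of dimension `2k` invariant under
`J₀(v,z) = (l ↦ i·v(l), i·z)` and `J₁(v,z) = (l ↦ (cos θ(l)·i + sin θ(l)·k)·v(l), i·z)`. -/
def invariantPlanesC (m : ℕ) (θ : Fin m → ℝ) (k : ℕ) :
    Set (Submodule ℝ ((Fin m → ℍ[ℝ]) × ℂ)) :=
  {P | Module.finrank ℝ P = 2 * k ∧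
    (∀ p ∈ P, ((fun l => qI * p.1 l, Complex.I * p.2) : (Fin m → ℍ[ℝ]) × ℂ) ∈ P) ∧
    (∀ p ∈ P, ((fun l => (Real.cos (θ l) • qI + Real.sin (θ l) • qK) * p.1 l,
        Complex.I * p.2) : (Fin m → ℍ[ℝ]) × ℂ) ∈ P)}

@[simp] theorem qI_re : qI.re = 0 := rfl
@[simp] theorem qI_imI : qI.imI = 1 := rfl
@[simp] theorem qI_imJ : qI.imJ = 0 := rfl
@[simp] theorem qI_imK : qI.imK = 0 := rfl
@[simp] theorem qK_re : qK.re = 0 := rfl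
@[simp] theorem qK_imI : qK.imI = 0 := rfl
@[simp] theorem qK_imJ : qK.imJ = 0 := rfl
@[simp] theorem qK_imK : qK.imK = 1 := rfl

/-- The coordinate subspace of `ℍ^m × ℂ` which is `ℍ^S × ℂ` if `b` is true and `ℍ^S × 0`
otherwise. -/
noncomputable def coordSub (m : ℕ) (S : Finset (Fin m)) (b : Bool) :
    Submodule ℝ ((Fin m → ℍ[ℝ]) × ℂ) :=
  Submodule.prod
    (⨅ i ∈ ((Sᶜ : Finset (Fin m)) : Set (Fin m)),
      LinearMap.ker (LinearMap.proj i : (Fin m → ℍ[ℝ]) →ₗ[ℝ] ℍ[ℝ]))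
    (if b then ⊤ else ⊥)

theorem mem_coordSub {m : ℕ} {S : Finset (Fin m)} {b : Bool} {p : (Fin m → ℍ[ℝ]) × ℂ} :
    p ∈ coordSub m S b ↔ (∀ l, l ∉ S → p.1 l = 0) ∧ (b = false → p.2 = 0) := by
  cases b <;> simp [coordSub, Submodule.mem_prod, Submodule.mem_iInf]

theorem finrank_coordSub (m : ℕ) (S : Finset (Fin m)) (b : Bool) :
    Module.finrank ℝ (coordSub m S b) = 4 * S.card + (if b then 2 else 0) := by
  have h1 : Module.finrank ℝ
      (⨅ i ∈ ((Sᶜ : Finset (Fin m)) : Set (Fin m)),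
        LinearMap.ker (LinearMap.proj i : (Fin m → ℍ[ℝ]) →ₗ[ℝ] ℍ[ℝ]) :
        Submodule ℝ (Fin m → ℍ[ℝ])) = 4 * S.card := by
    have e := LinearMap.iInfKerProjEquiv ℝ (fun _ : Fin m => ℍ[ℝ])
      (I := (S : Set (Fin m))) (J := ((Sᶜ : Finset (Fin m)) : Set (Fin m)))
      (by simpa using disjoint_compl_right) (by simp)
    rw [e.finrank_eq, Module.finrank_pi_fintype]
    simp [Quaternion.finrank_eq_four, mul_comm]
  have h2 : ∀ (A : Submodule ℝ (Fin m → ℍ[ℝ])) (B : Submodule ℝ ℂ),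
      Module.finrank ℝ (A.prod B) = Module.finrank ℝ A + Module.finrank ℝ B := by
    intro A B
    let e : (A.prod B) ≃ₗ[ℝ] A × B :=
      { Equiv.Set.prod (A : Set (Fin m → ℍ[ℝ])) (B : Set ℂ) with
        map_add' := fun _ _ => rfl
        map_smul' := fun _ _ => rfl }
    rw [e.finrank_eq, Module.finrank_prod]
  rw [coordSub, h2, h1]
  cases b <;> simp [Complex.finrank_real_complex]

theorem coordSub_injective (m : ℕ) (b : Bool) :
    Function.Injective (fun S => coordSub m S b) := by
  have key : ∀ S T : Finset (Fin m), coordSub m S b = coordSub m T b → S ⊆ T := by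
    intro S T h l hl
    by_contra hT
    have h1 : ((Pi.single l 1, 0) : (Fin m → ℍ[ℝ]) × ℂ) ∈ coordSub m S b := by
      rw [mem_coordSub]
      refine ⟨fun j hj => Pi.single_eq_of_ne (by rintro rfl; exact hj hl) _, fun _ => rfl⟩
    rw [h, mem_coordSub] at h1
    simpa using h1.1 l hT
  exact fun S T h => (key S T h).antisymm (key T S h.symm)

/-- A real subspace of `ℍ` stable under left multiplication by `i` and `k` is a left ideal, so it
is everything as soon as it has a nonzero element. -/
theorem quaternion_span (N : Submodule ℝ ℍ[ℝ]) (hI : ∀ q ∈ N, qI * q ∈ N)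
    (hK : ∀ q ∈ N, qK * q ∈ N) (q : ℍ[ℝ]) (hq : q ∈ N) (hq0 : q ≠ 0) (r : ℍ[ℝ]) : r ∈ N := by
  have h : ∀ a : ℍ[ℝ], a * q = a.re • q + a.imI • (qI * q) + a.imJ • (qK * (qI * q))
      + a.imK • (qK * q) := by
    intro a
    ext <;> simp <;> ring
  have hr : r = (r * q⁻¹) * q := by rw [mul_assoc, inv_mul_cancel₀ hq0, mul_one]
  rw [hr, h]
  exact N.add_mem (N.add_mem (N.add_mem (N.smul_mem _ hq) (N.smul_mem _ (hI q hq)))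
    (N.smul_mem _ (hK _ (hI q hq)))) (N.smul_mem _ (hK q hq))

/-- The scalars by which `-(J₀ J₁ + J₁ J₀) / 2` acts on the summands of `ℍ^m × ℂ`; the index `none`
stands for `ℂ`. -/
noncomputable def node {m : ℕ} (θ : Fin m → ℝ) : Option (Fin m) → ℝ
  | none => 1
  | some l => Real.cos (θ l)

theorem node_injective {m : ℕ} {θ : Fin m → ℝ} (hinj : Function.Injective θ)
    (hθ : ∀ l, θ l ∈ Set.Ioo (0 : ℝ) Real.pi) : Function.Injective (node θ) := by
  have hlt : ∀ l, Real.cos (θ l) ≠ 1 := by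
    intro l h
    have := Real.strictAntiOn_cos (Set.left_mem_Icc.2 Real.pi_pos.le)
      (Set.Ioo_subset_Icc_self (hθ l)) (hθ l).1
    rw [Real.cos_zero, h] at this
    exact lt_irrefl _ this
  rintro (_ | a) (_ | b) h
  · rfl
  · exact absurd h.symm (hlt b)
  · exact absurd h (hlt a)
  · exact congrArg some (hinj (Real.injOn_cos (Set.Ioo_subset_Icc_self (hθ a))
      (Set.Ioo_subset_Icc_self (hθ b)) h))

section Invariant

variable {m : ℕ} {θ : Fin m → ℝ} {P : Submodule ℝ ((Fin m → ℍ[ℝ]) × ℂ)}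

/-- An invariant subspace is stable under every polynomial in `-(J₀ J₁ + J₁ J₀) / 2`. -/
theorem poly_mem
    (h0 : ∀ p ∈ P, ((fun l => qI * p.1 l, Complex.I * p.2) : (Fin m → ℍ[ℝ]) × ℂ) ∈ P)
    (h1 : ∀ p ∈ P, ((fun l => (Real.cos (θ l) • qI + Real.sin (θ l) • qK) * p.1 l,
        Complex.I * p.2) : (Fin m → ℍ[ℝ]) × ℂ) ∈ P)
    (f : Polynomial ℝ) : ∀ p ∈ P,
    ((fun l => f.eval (node θ (some l)) • p.1 l, f.eval (node θ none) • p.2) :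
      (Fin m → ℍ[ℝ]) × ℂ) ∈ P := by
  have hT : ∀ p ∈ P, ((fun l => node θ (some l) • p.1 l, node θ none • p.2) :
      (Fin m → ℍ[ℝ]) × ℂ) ∈ P := by
    intro p hp
    have h := P.smul_mem (-(1 / 2 : ℝ)) (P.add_mem (h0 _ (h1 p hp)) (h1 _ (h0 p hp)))
    convert h using 1
    refine Prod.ext (funext fun l => ?_) ?_
    · ext <;> simp [node] <;> ring
    · apply Complex.ext <;> simp [node] <;> ring
  induction f using Polynomial.induction_on with
  | C a =>
    intro p hp
    convert P.smul_mem a hp using 1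
    refine Prod.ext (funext fun l => ?_) ?_ <;> simp
  | add f g hf hg =>
    intro p hp
    convert P.add_mem (hf p hp) (hg p hp) using 1
    refine Prod.ext (funext fun l => ?_) ?_ <;> simp [add_smul]
  | monomial n a h =>
    intro p hp
    convert hT _ (h p hp) using 1
    refine Prod.ext (funext fun l => ?_) ?_
    · simp only [Polynomial.eval_mul, Polynomial.eval_C, Polynomial.eval_pow, Polynomial.eval_X,
        smul_smul]
      ring_nf
    · simp only [Polynomial.eval_mul, Polynomial.eval_C, Polynomial.eval_pow, Polynomial.eval_X,
        smul_smul]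
      ring_nf

theorem single_mem (hn : Function.Injective (node θ))
    (h0 : ∀ p ∈ P, ((fun l => qI * p.1 l, Complex.I * p.2) : (Fin m → ℍ[ℝ]) × ℂ) ∈ P)
    (h1 : ∀ p ∈ P, ((fun l => (Real.cos (θ l) • qI + Real.sin (θ l) • qK) * p.1 l,
        Complex.I * p.2) : (Fin m → ℍ[ℝ]) × ℂ) ∈ P)
    (p : (Fin m → ℍ[ℝ]) × ℂ) (hp : p ∈ P) (l : Fin m) :
    ((Pi.single l (p.1 l), 0) : (Fin m → ℍ[ℝ]) × ℂ) ∈ P := by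
  convert poly_mem h0 h1 (Lagrange.basis Finset.univ (node θ) (some l)) p hp using 1
  refine Prod.ext (funext fun j => ?_) ?_
  · by_cases hj : j = l
    · subst hj
      simp [Lagrange.eval_basis_self hn.injOn (Finset.mem_univ (some j))]
    · have hne : some l ≠ some j := fun h => hj (Option.some.inj h).symm
      simp [hj, Lagrange.eval_basis_of_ne hne (Finset.mem_univ (some j))]
  · have hne : some l ≠ none := Option.some_ne_none l
    simp [Lagrange.eval_basis_of_ne hne (Finset.mem_univ none)]

theorem snd_mem (hn : Function.Injective (node θ))
    (h0 : ∀ p ∈ P, ((fun l => qI * p.1 l, Complex.I * p.2) : (Fin m → ℍ[ℝ]) × ℂ) ∈ P)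
    (h1 : ∀ p ∈ P, ((fun l => (Real.cos (θ l) • qI + Real.sin (θ l) • qK) * p.1 l,
        Complex.I * p.2) : (Fin m → ℍ[ℝ]) × ℂ) ∈ P)
    (p : (Fin m → ℍ[ℝ]) × ℂ) (hp : p ∈ P) :
    ((0, p.2) : (Fin m → ℍ[ℝ]) × ℂ) ∈ P := by
  convert poly_mem h0 h1 (Lagrange.basis Finset.univ (node θ) none) p hp using 1
  refine Prod.ext (funext fun j => ?_) ?_
  · have hne : none ≠ some j := (Option.some_ne_none j).symm
    simp [Lagrange.eval_basis_of_ne hne (Finset.mem_univ (some j))]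
  · simp [Lagrange.eval_basis_self hn.injOn (Finset.mem_univ none)]

/-- If an invariant subspace has an element with nonzero `l`-th component, it contains the whole
`l`-th summand `ℍ`. -/
theorem single_mem_of_ne (hn : Function.Injective (node θ)) (hs : ∀ l, Real.sin (θ l) ≠ 0)
    (h0 : ∀ p ∈ P, ((fun l => qI * p.1 l, Complex.I * p.2) : (Fin m → ℍ[ℝ]) × ℂ) ∈ P)
    (h1 : ∀ p ∈ P, ((fun l => (Real.cos (θ l) • qI + Real.sin (θ l) • qK) * p.1 l,
        Complex.I * p.2) : (Fin m → ℍ[ℝ]) × ℂ) ∈ P)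
    (p : (Fin m → ℍ[ℝ]) × ℂ) (hp : p ∈ P) (l : Fin m) (hl : p.1 l ≠ 0) (r : ℍ[ℝ]) :
    ((Pi.single l r, 0) : (Fin m → ℍ[ℝ]) × ℂ) ∈ P := by
  let N : Submodule ℝ ℍ[ℝ] := P.comap
    ((LinearMap.inl ℝ (Fin m → ℍ[ℝ]) ℂ).comp (LinearMap.single ℝ (fun _ : Fin m => ℍ[ℝ]) l))
  have hN : ∀ q, q ∈ N ↔ ((Pi.single l q, 0) : (Fin m → ℍ[ℝ]) × ℂ) ∈ P := fun q => Iff.rfl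
  have hI : ∀ q ∈ N, qI * q ∈ N := by
    intro q hq
    rw [hN] at hq ⊢
    simpa using single_mem hn h0 h1 _ (h0 _ hq) l
  have hK : ∀ q ∈ N, qK * q ∈ N := by
    intro q hq
    have h2 : (Real.cos (θ l) • qI + Real.sin (θ l) • qK) * q ∈ N := by
      rw [hN] at hq ⊢
      simpa using single_mem hn h0 h1 _ (h1 _ hq) l
    have h3 := N.smul_mem (Real.sin (θ l))⁻¹
      (N.sub_mem h2 (N.smul_mem (Real.cos (θ l)) (hI q hq)))
    convert h3 using 1
    rw [add_mul, smul_mul_assoc, smul_mul_assoc, add_sub_cancel_left, inv_smul_smul₀ (hs l)]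
  exact (hN r).1 (quaternion_span N hI hK (p.1 l)
    ((hN _).2 (single_mem hn h0 h1 p hp l)) hl r)

/-- If an invariant subspace has an element with nonzero `ℂ`-component, it contains the whole
summand `ℂ`. -/
theorem snd_mem_of_ne (hn : Function.Injective (node θ))
    (h0 : ∀ p ∈ P, ((fun l => qI * p.1 l, Complex.I * p.2) : (Fin m → ℍ[ℝ]) × ℂ) ∈ P)
    (h1 : ∀ p ∈ P, ((fun l => (Real.cos (θ l) • qI + Real.sin (θ l) • qK) * p.1 l,
        Complex.I * p.2) : (Fin m → ℍ[ℝ]) × ℂ) ∈ P)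
    (p : (Fin m → ℍ[ℝ]) × ℂ) (hp : p ∈ P) (hz : p.2 ≠ 0) (w : ℂ) :
    ((0, w) : (Fin m → ℍ[ℝ]) × ℂ) ∈ P := by
  have ha := snd_mem hn h0 h1 p hp
  have hb := snd_mem hn h0 h1 _ (h0 p hp)
  have h := P.add_mem (P.smul_mem (w / p.2).re ha) (P.smul_mem (w / p.2).im hb)
  convert h using 1
  refine Prod.ext (by simp) ?_
  have hw : w = (((w / p.2).re : ℂ) + ((w / p.2).im : ℂ) * Complex.I) * p.2 := by
    rw [Complex.re_add_im, div_mul_cancel₀ _ hz]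
  simp only [Prod.snd_add, Prod.smul_snd, Complex.real_smul]
  linear_combination hw

/-- Every subspace invariant under `J₀` and `J₁` is a coordinate subspace. -/
theorem eq_coordSub (hn : Function.Injective (node θ)) (hs : ∀ l, Real.sin (θ l) ≠ 0)
    (h0 : ∀ p ∈ P, ((fun l => qI * p.1 l, Complex.I * p.2) : (Fin m → ℍ[ℝ]) × ℂ) ∈ P)
    (h1 : ∀ p ∈ P, ((fun l => (Real.cos (θ l) • qI + Real.sin (θ l) • qK) * p.1 l,
        Complex.I * p.2) : (Fin m → ℍ[ℝ]) × ℂ) ∈ P) :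
    ∃ S b, P = coordSub m S b := by
  classical
  refine ⟨Finset.univ.filter fun l => ∃ p ∈ P, p.1 l ≠ 0, decide (∃ p ∈ P, p.2 ≠ 0),
    le_antisymm (fun p hp => ?_) (fun p hp => ?_)⟩
  · rw [mem_coordSub]
    refine ⟨fun l hl => ?_, fun hb => ?_⟩
    · by_contra hne
      exact hl (Finset.mem_filter.2 ⟨Finset.mem_univ _, p, hp, hne⟩)
    · by_contra hne
      exact of_decide_eq_false hb ⟨p, hp, hne⟩
  · rw [mem_coordSub] at hp
    have hsum : p = (∑ l, ((Pi.single l (p.1 l), 0) : (Fin m → ℍ[ℝ]) × ℂ)) + (0, p.2) := by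
      refine Prod.ext ?_ ?_
      · rw [Prod.fst_add, Prod.fst_sum, Finset.univ_sum_single, add_zero]
      · simp [Prod.snd_sum]
    rw [hsum]
    refine P.add_mem (P.sum_mem fun l _ => ?_) ?_
    · by_cases hl : ∃ q ∈ P, q.1 l ≠ 0
      · obtain ⟨q, hq, hne⟩ := hl
        exact single_mem_of_ne hn hs h0 h1 q hq l hne _
      · rw [hp.1 l (by simpa using hl)]
        rw [Pi.single_zero]
        exact P.zero_mem
    · by_cases hz : ∃ q ∈ P, q.2 ≠ 0
      · obtain ⟨q, hq, hne⟩ := hz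
        exact snd_mem_of_ne hn h0 h1 q hq hne _
      · rw [hp.2 (decide_eq_false hz)]
        exact P.zero_mem

end Invariant

/-- The invariant `2k`-planes are the coordinate subspaces on `⌊k/2⌋` quaternionic summands,
together with `ℂ` exactly when `k` is odd. -/
theorem invariantPlanesC_eq (m : ℕ) (θ : Fin m → ℝ)
    (hinj : Function.Injective θ) (hθ : ∀ l, θ l ∈ Set.Ioo (0 : ℝ) Real.pi) (k : ℕ) :
    invariantPlanesC m θ k = (fun S => coordSub m S (decide (k % 2 = 1))) ''
      (Finset.powersetCard (k / 2) (Finset.univ : Finset (Fin m)) : Set (Finset (Fin m))) := by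
  ext P
  constructor
  · rintro ⟨hd, h0, h1⟩
    obtain ⟨S, b, rfl⟩ := eq_coordSub (node_injective hinj hθ)
      (fun l => (Real.sin_pos_of_mem_Ioo (hθ l)).ne') h0 h1
    rw [finrank_coordSub] at hd
    cases b
    · have hk2 : ¬ k % 2 = 1 := by simp at hd; omega
      refine ⟨S, ?_, by simp [hk2]⟩
      simp at hd ⊢
      omega
    · have hk2 : k % 2 = 1 := by simp at hd; omega
      refine ⟨S, ?_, by simp [hk2]⟩
      simp at hd ⊢
      omega
  · rintro ⟨S, hS, rfl⟩
    have hc : S.card = k / 2 := by simpa using hS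
    refine ⟨?_, fun p hp => ?_, fun p hp => ?_⟩
    · rw [finrank_coordSub, hc]
      by_cases hk2 : k % 2 = 1 <;> simp [hk2] <;> omega
    · rw [mem_coordSub] at hp ⊢
      exact ⟨fun l hl => by simp [hp.1 l hl], fun hb => by simp [hp.2 hb]⟩
    · rw [mem_coordSub] at hp ⊢
      exact ⟨fun l hl => by simp [hp.1 l hl], fun hb => by simp [hp.2 hb]⟩

/-- For a generic pair of orthogonal complex structures on `ℍ^m × ℂ` of type
`ℍ_{θ₁} ⊕ ⋯ ⊕ ℍ_{θ_m} ⊕ ℂ`, the set of invariant `2k`-planes is finite of cardinality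
`σ(k, 2m+1) = binomial(m, ⌊k/2⌋)`. -/
theorem card_invariant_planes_plus_C (m : ℕ) (θ : Fin m → ℝ)
    (hinj : Function.Injective θ) (hθ : ∀ l, θ l ∈ Set.Ioo (0 : ℝ) Real.pi)
    (k : ℕ) (hk : k ≤ 2 * m + 1) :
    (invariantPlanesC m θ k).Finite ∧
      ((invariantPlanesC m θ k).ncard : ℤ) = sigmaInt k (2 * m + 1) ∧
      (invariantPlanesC m θ k).ncard = m.choose (k / 2) := by
  have heq := invariantPlanesC_eq m θ hinj hθ k
  have hcard : (invariantPlanesC m θ k).ncard = m.choose (k / 2) := by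
    rw [heq, Set.ncard_image_of_injective _ (coordSub_injective m _), Set.ncard_coe_finset]
    simp
  refine ⟨by rw [heq]; exact (Finset.finite_toSet _).image _, ?_, hcard⟩
  have e1 : ¬ ((k : ℤ) < 0 ∨ 2 * (m : ℤ) + 1 < k) := by omega
  have e2 : ¬ (Odd (k : ℤ) ∧ Even (2 * (m : ℤ) + 1)) := fun h =>
    Int.not_even_iff_odd.2 ⟨m, rfl⟩ h.2
  have e3 : ((2 * (m : ℤ) + 1) / 2).toNat = m := by omega
  have e4 : ((k : ℤ) / 2).toNat = k / 2 := by omega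
  rw [hcard, sigmaInt, if_neg e1, if_neg e2, e3, e4]
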